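/- Let γ ∈ (π/2, π] and C > 0 satisfy 2·C·cos(γ/2) + cos γ ≤ 0 (equivalently F′(0) ≥ 0). Then there is a unique φ* ∈ (π/2, π) with F′(φ*) = 0; moreover F′(φ) > 0 for all φ ∈ (0, φ*) and F′(φ) < 0 for all φ ∈ (φ*, π], so F is strictly increasing on [0, φ*] and strictly decreasing on [φ*, π]. -/

import Mathlib

/-!
For `φ ∈ [π/2, π]` the angles `φ` and `(φ + γ) / 2` both lie in the second quadrant, where sine is
nonnegative and decreasing and cosine is nonpositive and decreasing, while `φ + γ` lies in
`[π, 2π]`, where cosine increases. Hence every term of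
`F' φ / 2 = -cos (φ + γ) + C sin ((φ + γ) / 2) sin φ - 2 C cos ((φ + γ) / 2) cos φ + C² sin² φ`
decreases on `[π/2, π]`, and `F' π < 0`. On `(0, π/2]` the condition `F' 0 ≥ 0` propagates to
`F' φ > 0`, because `cos ((φ + γ) / 2) ≤ cos (γ / 2)`. So `F'` changes sign exactly once.
-/

open Real Set

section Crossing

variable {α β : Type*} [ConditionallyCompleteLinearOrder α] [TopologicalSpace α] [OrderTopology α]
  [DenselyOrdered α] [LinearOrder β] [TopologicalSpace β] [OrderClosedTopology β]

theorem exists_crossing_of_strictAntiOn {f : α → β} {a b c : α} {v : β} (hab : a < b) (hbc : b ≤ c)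
    (hcont : ContinuousOn f (Icc b c)) (hanti : StrictAntiOn f (Icc b c))
    (hgt : ∀ x ∈ Ioc a b, v < f x) (hlt : f c < v) :
    ∃ z ∈ Ioo b c, f z = v ∧ (∀ x ∈ Ioo a z, v < f x) ∧ ∀ x ∈ Ioc z c, f x < v := by
  obtain ⟨z, hz, rfl⟩ := intermediate_value_Ioo' hbc hcont ⟨hlt, hgt b ⟨hab, le_rfl⟩⟩
  have hz' : z ∈ Icc b c := Ioo_subset_Icc_self hz
  refine ⟨z, hz, rfl, fun x hx => ?_, fun x hx => hanti hz' ⟨hz.1.le.trans hx.1.le, hx.2⟩ hx.1⟩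
  rcases le_or_gt x b with hxb | hbx
  · exact hgt x ⟨hx.1, hxb⟩
  · exact hanti ⟨hbx.le, hx.2.le.trans hz.2.le⟩ hz' hx.2

end Crossing

section Trigonometry

theorem strictMonoOn_cos_Icc_pi_two_pi : StrictMonoOn cos (Icc π (2 * π)) := by
  rintro x ⟨hx, -⟩ y ⟨-, hy⟩ hxy
  have h : cos (y - π) < cos (x - π) :=
    cos_lt_cos_of_nonneg_of_le_pi (by linarith) (by linarith) (by linarith)
  simpa only [cos_sub_pi, neg_lt_neg_iff] using h

theorem antitoneOn_sin_Icc_pi_div_two_pi : AntitoneOn sin (Icc (π / 2) π) := by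
  rintro x ⟨hx, -⟩ y ⟨-, hy⟩ hxy
  rw [← sin_pi_sub x, ← sin_pi_sub y]
  exact sin_le_sin_of_le_of_le_pi_div_two (by linarith [pi_pos]) (by linarith) (by linarith)

variable {x x' y y' : ℝ}

theorem sin_nonneg_of_mem_Icc_pi_div_two_pi (hx : x ∈ Icc (π / 2) π) : 0 ≤ sin x :=
  sin_nonneg_of_nonneg_of_le_pi (pi_div_two_pos.le.trans hx.1) hx.2

theorem cos_nonpos_of_mem_Icc_pi_div_two_pi (hx : x ∈ Icc (π / 2) π) : cos x ≤ 0 :=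
  cos_nonpos_of_pi_div_two_le_of_le hx.1 (by linarith [hx.2, pi_pos])

theorem sin_mul_sin_le_sin_mul_sin (hx : x ∈ Icc (π / 2) π) (hx' : x' ∈ Icc (π / 2) π)
    (hy : y ∈ Icc (π / 2) π) (hy' : y' ∈ Icc (π / 2) π) (hxx' : x ≤ x') (hyy' : y ≤ y') :
    sin x' * sin y' ≤ sin x * sin y :=
  mul_le_mul (antitoneOn_sin_Icc_pi_div_two_pi hx hx' hxx')
    (antitoneOn_sin_Icc_pi_div_two_pi hy hy' hyy')
    (sin_nonneg_of_mem_Icc_pi_div_two_pi hy') (sin_nonneg_of_mem_Icc_pi_div_two_pi hx)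

theorem cos_mul_cos_le_cos_mul_cos (hx : x ∈ Icc (π / 2) π) (hx' : x' ∈ Icc (π / 2) π)
    (hy : y ∈ Icc (π / 2) π) (hy' : y' ∈ Icc (π / 2) π) (hxx' : x ≤ x') (hyy' : y ≤ y') :
    cos x * cos y ≤ cos x' * cos y' :=
  have hcos : AntitoneOn cos (Icc (π / 2) π) :=
    antitoneOn_cos.mono (Icc_subset_Icc_left pi_div_two_pos.le)
  mul_le_mul_of_nonpos_of_nonpos (hcos hx hx' hxx') (hcos hy hy' hyy')
    (cos_nonpos_of_mem_Icc_pi_div_two_pi hx') (cos_nonpos_of_mem_Icc_pi_div_two_pi hy)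

end Trigonometry

/-- The dimensionless total force `F`, with its parameters explicit. -/
noncomputable def totalForce (γ A C φ : ℝ) : ℝ :=
  -A * C ^ 2 - 2 * sin (φ + γ) - 4 * C * cos ((φ + γ) / 2) * sin φ
    - (1 / 2) * C ^ 2 * sin (2 * φ) + C ^ 2 * φ

/-- The derivative `F'` of the total force, with `C ^ 2 * (1 - cos (2 * φ))` written as
`2 * C ^ 2 * (sin φ * sin φ)`, so that its terms are products of sines or of cosines. -/
noncomputable def totalForceDeriv (γ C φ : ℝ) : ℝ :=
  2 * (-cos (φ + γ) + C * (sin ((φ + γ) / 2) * sin φ) - 2 * C * (cos ((φ + γ) / 2) * cos φ)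
    + C ^ 2 * (sin φ * sin φ))

section TotalForce

variable {γ A C φ : ℝ}

theorem hasDerivAt_totalForce : HasDerivAt (totalForce γ A C) (totalForceDeriv γ C φ) φ := by
  have hadd : HasDerivAt (fun φ : ℝ => φ + γ) 1 φ := (hasDerivAt_id φ).add_const γ
  have hdouble : HasDerivAt (fun φ : ℝ => 2 * φ) (2 * 1) φ := (hasDerivAt_id φ).const_mul 2
  have hderiv := (((hadd.sin.const_mul 2).const_sub (-A * C ^ 2)).sub
    (((hadd.div_const 2).cos.const_mul (4 * C)).mul (hasDerivAt_sin φ))).sub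
    (hdouble.sin.const_mul ((1 / 2) * C ^ 2)) |>.add ((hasDerivAt_id φ).const_mul (C ^ 2))
  refine hderiv.congr_deriv ?_
  rw [totalForceDeriv, ← sq (sin φ), cos_two_mul, sin_sq]
  ring

theorem deriv_totalForce : deriv (totalForce γ A C) = totalForceDeriv γ C :=
  funext fun _ => hasDerivAt_totalForce.deriv

theorem continuous_totalForce : Continuous (totalForce γ A C) := by
  unfold totalForce; fun_prop

theorem continuous_totalForceDeriv : Continuous (totalForceDeriv γ C) := by
  unfold totalForceDeriv; fun_prop

theorem strictAntiOn_totalForceDeriv (hγ : γ ∈ Icc (π / 2) π) (hC : 0 ≤ C) :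
    StrictAntiOn (totalForceDeriv γ C) (Icc (π / 2) π) := by
  intro x hx y hy hxy
  have hhalf {φ : ℝ} (hφ : φ ∈ Icc (π / 2) π) : (φ + γ) / 2 ∈ Icc (π / 2) π :=
    ⟨by linarith [hφ.1, hγ.1], by linarith [hφ.2, hγ.2]⟩
  have hle : (x + γ) / 2 ≤ (y + γ) / 2 := by linarith
  have hcos : cos (x + γ) < cos (y + γ) :=
    strictMonoOn_cos_Icc_pi_two_pi ⟨by linarith [hx.1, hγ.1], by linarith [hx.2, hγ.2]⟩
      ⟨by linarith [hy.1, hγ.1], by linarith [hy.2, hγ.2]⟩ (by linarith)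
  have hsin_half := mul_le_mul_of_nonneg_left
    (sin_mul_sin_le_sin_mul_sin (hhalf hx) (hhalf hy) hx hy hle hxy.le) hC
  have hcos_half := mul_le_mul_of_nonneg_left
    (cos_mul_cos_le_cos_mul_cos (hhalf hx) (hhalf hy) hx hy hle hxy.le) (mul_nonneg two_pos.le hC)
  have hsin_sq := mul_le_mul_of_nonneg_left
    (sin_mul_sin_le_sin_mul_sin hx hy hx hy hxy.le hxy.le) (sq_nonneg C)
  unfold totalForceDeriv
  linarith

theorem totalForceDeriv_pos (hγ : γ ∈ Icc 0 π) (hC : 0 < C)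
    (hcond : 2 * C * cos (γ / 2) + cos γ ≤ 0) (hφ : φ ∈ Ioc 0 (π / 2)) :
    0 < totalForceDeriv γ C φ := by
  obtain ⟨hγ₀, hγπ⟩ := hγ
  obtain ⟨hφ₀, hφπ⟩ := hφ
  have hsin : 0 < sin φ := sin_pos_of_pos_of_lt_pi hφ₀ (by linarith)
  have hcos : 0 ≤ cos φ := cos_nonneg_of_neg_pi_div_two_le_of_le (by linarith) hφπ
  have hsin_γ : 0 ≤ sin γ := sin_nonneg_of_nonneg_of_le_pi hγ₀ hγπ
  have hsin_half : 0 < sin ((φ + γ) / 2) := sin_pos_of_pos_of_lt_pi (by linarith) (by linarith)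
  have hcond_half : 2 * C * cos ((φ + γ) / 2) + cos γ ≤ 0 :=
    calc 2 * C * cos ((φ + γ) / 2) + cos γ
        ≤ 2 * C * cos (γ / 2) + cos γ := by
          gcongr
          exact cos_le_cos_of_nonneg_of_le_pi (by linarith) (by linarith) (by linarith)
      _ ≤ 0 := hcond
  have hcos_term : 0 ≤ -(2 * C * cos ((φ + γ) / 2) + cos γ) * cos φ :=
    mul_nonneg (neg_nonneg.2 hcond_half) hcos
  calc 0 < 2 * (-(2 * C * cos ((φ + γ) / 2) + cos γ) * cos φ + sin φ * sin γ
        + C * (sin ((φ + γ) / 2) * sin φ) + C ^ 2 * (sin φ * sin φ)) := by positivity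
    _ = totalForceDeriv γ C φ := by rw [totalForceDeriv, cos_add]; ring

theorem totalForceDeriv_pi : totalForceDeriv γ C π = 2 * (cos γ - 2 * C * sin (γ / 2)) := by
  have hcos_half : cos ((π + γ) / 2) = -sin (γ / 2) := by
    rw [add_div, add_comm, cos_add_pi_div_two]
  rw [totalForceDeriv, hcos_half, add_comm π γ, cos_add_pi, sin_pi, cos_pi]
  ring

theorem totalForceDeriv_pi_neg (hγ : γ ∈ Icc (π / 2) π) (hC : 0 < C) :
    totalForceDeriv γ C π < 0 := by
  have hcos : cos γ ≤ 0 := cos_nonpos_of_mem_Icc_pi_div_two_pi hγ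
  have hsin : 0 < sin (γ / 2) :=
    sin_pos_of_pos_of_lt_pi (by linarith [hγ.1, pi_pos]) (by linarith [hγ.2, pi_pos])
  have hprod : 0 < C * sin (γ / 2) := mul_pos hC hsin
  rw [totalForceDeriv_pi]
  linarith

end TotalForce

/-- For `γ ∈ (π/2, π]` and `C > 0` with `2·C·cos(γ/2) + cos γ ≤ 0` (i.e. `F′(0) ≥ 0`), there is
a unique `φ* ∈ (π/2, π)` with `F′(φ*) = 0`; `F′ > 0` on `(0, φ*)`, `F′ < 0` on `(φ*, π]`, so
`F` strictly increases on `[0, φ*]` and strictly decreases on `[φ*, π]`. -/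
theorem total_force_unique_max_obtuse (γ A C : ℝ)
    (hγ : γ ∈ Set.Ioc (Real.pi / 2) Real.pi) (hA : 0 < A) (hC : 0 < C)
    (hcond : 2 * C * Real.cos (γ / 2) + Real.cos γ ≤ 0)
    (F : ℝ → ℝ)
    (hF : F = fun φ => -A * C ^ 2 - 2 * Real.sin (φ + γ)
      - 4 * C * Real.cos ((φ + γ) / 2) * Real.sin φ
      - (1 / 2) * C ^ 2 * Real.sin (2 * φ) + C ^ 2 * φ) :
    ∃ φs : ℝ, φs ∈ Set.Ioo (Real.pi / 2) Real.pi ∧ deriv F φs = 0 ∧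
      (∀ ψ ∈ Set.Ioo (Real.pi / 2) Real.pi, deriv F ψ = 0 → ψ = φs) ∧
      (∀ φ ∈ Set.Ioo (0 : ℝ) φs, 0 < deriv F φ) ∧
      (∀ φ ∈ Set.Ioc φs Real.pi, deriv F φ < 0) ∧
      StrictMonoOn F (Set.Icc 0 φs) ∧
      StrictAntiOn F (Set.Icc φs Real.pi) := by
  obtain rfl : F = totalForce γ A C := hF
  have hγ' : γ ∈ Icc (π / 2) π := Ioc_subset_Icc_self hγ
  have hγ₀ : γ ∈ Icc 0 π := Icc_subset_Icc_left pi_div_two_pos.le hγ'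
  have hanti := strictAntiOn_totalForceDeriv hγ' hC.le
  obtain ⟨φs, hφs, hzero, hpos, hneg⟩ := exists_crossing_of_strictAntiOn pi_div_two_pos
    (half_le_self pi_pos.le) continuous_totalForceDeriv.continuousOn hanti
    (fun φ hφ => totalForceDeriv_pos hγ₀ hC hcond hφ) (totalForceDeriv_pi_neg hγ' hC)
  have hunique : ∀ ψ ∈ Ioo (π / 2) π, totalForceDeriv γ C ψ = 0 → ψ = φs := fun ψ hψ h =>
    hanti.injOn (Ioo_subset_Icc_self hψ) (Ioo_subset_Icc_self hφs) (h.trans hzero.symm)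
  have hmono : StrictMonoOn (totalForce γ A C) (Icc 0 φs) :=
    strictMonoOn_of_deriv_pos (convex_Icc _ _) continuous_totalForce.continuousOn
      (by rwa [interior_Icc, deriv_totalForce])
  have hdecr : StrictAntiOn (totalForce γ A C) (Icc φs π) :=
    strictAntiOn_of_deriv_neg (convex_Icc _ _) continuous_totalForce.continuousOn
      (by rw [interior_Icc, deriv_totalForce]; exact fun φ hφ => hneg φ (Ioo_subset_Ioc_self hφ))
  rw [deriv_totalForce]
  exact ⟨φs, hφs, hzero, hunique, hpos, hneg, hmono, hdecr⟩
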